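/- In the line model with M layers, for every n ≥ 2, every x^{(n)} = (x_1,…,x_n) ∈ {0,1}^n and every m ∈ {0,1,…,M}: Q_{x^{(n)}}(m) = (1−x_n) q̄^m Σ_{i=0}^{M−m} C(M−m,i) q^i q̄^{M−m−i} Q_{x^{(n−1)}}(i) + x_n Σ_{j=1}^m C(m,j) q^j q̄^{m−j} Σ_{i=0}^{M−m} C(M−m,i) q^i q̄^{M−m−i} Q_{x^{(n−1)}}(i+j), where x^{(n−1)} = (x_1,…,x_{n−1}) and C(a,b) denotes the binomial coefficient. -/

import Mathlib

open MeasureTheory ProbabilityTheory Finset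

/-- Bernoulli measure on `Bool` with success probability `p`. -/
noncomputable def bern (p : ℝ) : Measure Bool :=
  ENNReal.ofReal p • Measure.dirac true + ENNReal.ofReal (1 - p) • Measure.dirac false

/-- The line model with `M` layers, `n` links (hence `n+1` nodes), node activation
probability `q`: every node is active on every layer independently with probability `q`. -/
noncomputable def lineμ (M n : ℕ) (q : ℝ) : Measure ((Fin M × Fin (n + 1)) → Bool) :=
  Measure.pi fun _ => bern q

/-- Link `e_{j+1} = (j+1, j+2)` (1-based) is active: some layer has both endpoints active. -/
def act {M n : ℕ} (j : Fin n) (ω : (Fin M × Fin (n + 1)) → Bool) : Prop :=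
  ∃ m : Fin M, ω (m, j.castSucc) = true ∧ ω (m, j.succ) = true

/-- The event that the links are in configuration `x` (1-based: link `e_j` is active
iff `x j = 1`). -/
def cfg {M n : ℕ} (x : ℕ → ℝ) : Set ((Fin M × Fin (n + 1)) → Bool) :=
  {ω | ∀ j : Fin n, (act j ω ↔ x (j.val + 1) = 1)}

/-- The event that the set of layers on which the last node `n+1` is active equals `A`. -/
def lastIn {M n : ℕ} (A : Finset (Fin M)) : Set ((Fin M × Fin (n + 1)) → Bool) :=
  {ω | ∀ k : Fin M, (ω (k, Fin.last n) = true ↔ k ∈ A)}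

/-- `Q_{x^{(n)}}(m)`: conditional probability of configuration `x` given that the set of
layers on which node `n+1` is active equals the fixed set `A` (of cardinality `m`). -/
noncomputable def Qcond (M n : ℕ) (q : ℝ) (x : ℕ → ℝ) (A : Finset (Fin M)) : ℝ :=
  (ProbabilityTheory.cond (lineμ M n q) (lastIn A) (cfg x)).toReal

/-! Given that node `n + 2` is active exactly on the layers in `A`, the first `n + 1` nodes still
follow the line model, by independence, and the last link is active iff the set `S` of active
layers of node `n + 1` meets `A`. Conditioning on `S`, which has probability
`q ^ #S * (1 - q) ^ (M - #S)`, expresses `Qcond M (n + 1) q x A` as a sum over `S` of multiples of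
`Qcond M n q x S`. Permuting layers preserves the measure, so the latter depends only on `#S`, and
it remains to count the sets `S` with `#(S ∩ A) = j` and `#(S \ A) = i`. The recursion keeps the
sets with `j = 0` when the last link is inactive and those with `j ≥ 1` when it is active. -/

lemma sum_univ_inter_sdiff {ι R : Type*} [Fintype ι] [DecidableEq ι] [AddCommMonoid R]
    (A : Finset ι) (f : Finset ι → Finset ι → R) :
    ∑ S, f (S ∩ A) (S \ A) = ∑ T ∈ A.powerset, ∑ U ∈ Aᶜ.powerset, f T U := by
  rw [← sum_product']
  refine sum_nbij' (fun S => (S ∩ A, S \ A)) (fun p => p.1 ∪ p.2) ?_ ?_ ?_ ?_ ?_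
  · simp [subset_compl_iff_disjoint_right, sdiff_disjoint]
  · simp
  · exact fun S _ => sup_inf_sdiff S A
  · rintro ⟨T, U⟩ hTU
    obtain ⟨hT : T ⊆ A, hU : U ⊆ Aᶜ⟩ := by simpa using hTU
    have hUA : Disjoint U A := le_compl_iff_disjoint_right.1 hU
    simp [union_inter_distrib_right, union_sdiff_distrib, inter_eq_left.2 hT,
      sdiff_eq_empty_iff_subset.2 hT, disjoint_iff_inter_eq_empty.1 hUA, hUA.sdiff_eq_left]
  · simp

lemma sum_univ_card_inter_card_sdiff {ι R : Type*} [Fintype ι] [DecidableEq ι] [AddCommMonoid R]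
    (A : Finset ι) (g : ℕ → ℕ → R) :
    ∑ S, g #(S ∩ A) #(S \ A) =
      ∑ j ∈ range (#A + 1), (#A).choose j •
        ∑ i ∈ range (Fintype.card ι - #A + 1), (Fintype.card ι - #A).choose i • g j i := by
  rw [sum_univ_inter_sdiff A fun T U => g #T #U,
    ← sum_powerset_apply_card fun j => ∑ i ∈ range (Fintype.card ι - #A + 1), _ • g j i]
  simp only [sum_powerset_apply_card (g _), card_compl]

lemma measurePreserving_comp_equiv {ι ι' α : Type*} [Fintype ι] [Fintype ι'] [MeasurableSpace α]
    (μ : Measure α) [SigmaFinite μ] (e : ι' ≃ ι) :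
    MeasurePreserving (fun ω : ι → α => ω ∘ e) (Measure.pi fun _ => μ) (Measure.pi fun _ => μ) :=
  measurePreserving_arrowCongr' (fun _ => μ) (fun _ => μ) e.symm (.refl α) fun _ => .id μ

/-- The array `ω`, with rows `κ` and columns `Fin N`, with `a` appended as its last column. With
layers as rows and nodes as columns it extends a configuration of the line model by one node. -/
def appendColumn {κ α : Type*} {N : ℕ} (a : κ → α) (ω : κ × Fin N → α) :
    κ × Fin (N + 1) → α :=
  fun p => Fin.snoc (α := fun _ => α) (fun j => ω (p.1, j)) (a p.1) p.2

@[simp] lemma appendColumn_last {κ α : Type*} {N : ℕ} (a : κ → α) (ω : κ × Fin N → α) (k : κ) :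
    appendColumn a ω (k, Fin.last N) = a k := by
  simp [appendColumn]

@[simp] lemma appendColumn_castSucc {κ α : Type*} {N : ℕ} (a : κ → α) (ω : κ × Fin N → α)
    (k : κ) (j : Fin N) : appendColumn a ω (k, j.castSucc) = ω (k, j) := by
  simp [appendColumn]

lemma measurable_appendColumn {κ α : Type*} [MeasurableSpace α] {N : ℕ} :
    Measurable fun p : (κ → α) × (κ × Fin N → α) => appendColumn p.1 p.2 := by
  refine measurable_pi_lambda _ fun ⟨k, j⟩ => ?_
  induction j using Fin.lastCases <;>
    simp only [appendColumn_last, appendColumn_castSucc] <;> fun_prop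

lemma measurePreserving_appendColumn {κ α : Type*} [Fintype κ] [MeasurableSpace α]
    (μ : Measure α) [SigmaFinite μ] (N : ℕ) :
    MeasurePreserving (fun p : (κ → α) × (κ × Fin N → α) => appendColumn p.1 p.2)
      ((Measure.pi fun _ => μ).prod (Measure.pi fun _ => μ)) (Measure.pi fun _ => μ) := by
  refine ⟨measurable_appendColumn, (Measure.pi_eq fun s hs => ?_).symm⟩
  have hbox : (fun p : (κ → α) × (κ × Fin N → α) => appendColumn p.1 p.2) ⁻¹' Set.univ.pi s =
      (Set.univ.pi fun k => s (k, Fin.last N)) ×ˢ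
        (Set.univ.pi fun p : κ × Fin N => s (p.1, p.2.castSucc)) := by
    ext p
    simp [Set.mem_pi, Fin.forall_fin_succ', forall_and, and_comm]
  rw [Measure.map_apply measurable_appendColumn (.univ_pi hs), hbox, Measure.prod_prod,
    Measure.pi_pi, Measure.pi_pi]
  simp only [Fintype.prod_prod_type, Fin.prod_univ_castSucc, prod_mul_distrib, mul_comm]

instance isFiniteMeasure_bern (q : ℝ) : IsFiniteMeasure (bern q) :=
  ⟨by simp [bern]⟩

lemma isProbabilityMeasure_bern {q : ℝ} (hq : q ∈ Set.Icc (0 : ℝ) 1) :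
    IsProbabilityMeasure (bern q) := by
  constructor
  simp [bern, ← ENNReal.ofReal_add hq.1 (sub_nonneg.2 hq.2)]

lemma bern_real_singleton {q : ℝ} (hq : q ∈ Set.Icc (0 : ℝ) 1) (b : Bool) :
    (bern q).real {b} = if b then q else 1 - q := by
  cases b <;> simp [bern, Measure.real, hq.1, hq.2]

lemma pi_bern_real_singleton_mem {κ : Type*} [Fintype κ] [DecidableEq κ] {q : ℝ}
    (hq : q ∈ Set.Icc (0 : ℝ) 1) (A : Finset κ) :
    (Measure.pi fun _ : κ => bern q).real {fun k => decide (k ∈ A)} =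
      q ^ #A * (1 - q) ^ (Fintype.card κ - #A) := by
  have hcompl : ({k | k ∉ A} : Finset κ) = Aᶜ := by ext; simp
  simp only [Measure.real, Measure.pi_singleton, ENNReal.toReal_prod]
  simp only [← measureReal_def, bern_real_singleton hq, decide_eq_true_eq, prod_ite,
    prod_const, filter_univ_mem, hcompl, card_compl]

section LineModel

variable {M n : ℕ} {q : ℝ}

instance isFiniteMeasure_lineμ : IsFiniteMeasure (lineμ M n q) :=
  inferInstanceAs (IsFiniteMeasure (Measure.pi _))

/-- The set of layers on which the last node is active, that is, the random variable on whose value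
`Qcond` conditions. -/
def lastLayers (ω : Fin M × Fin (n + 1) → Bool) : Finset (Fin M) :=
  {k | ω (k, Fin.last n) = true}

@[simp] lemma mem_lastLayers {ω : Fin M × Fin (n + 1) → Bool} {k : Fin M} :
    k ∈ lastLayers ω ↔ ω (k, Fin.last n) = true := by
  simp [lastLayers]

lemma lastIn_eq_preimage (A : Finset (Fin M)) : lastIn (n := n) A = lastLayers ⁻¹' {A} := by
  ext
  simp [lastIn, Finset.ext_iff]

lemma appendColumn_mem_lastIn (A : Finset (Fin M)) (a : Fin M → Bool)
    (ω : Fin M × Fin n → Bool) :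
    appendColumn a ω ∈ lastIn A ↔ a = fun k => decide (k ∈ A) := by
  simp only [lastIn, Set.mem_ofPred_eq, appendColumn_last, funext_iff]
  exact forall_congr' fun k => by cases a k <;> simp

lemma appendColumn_mem_cfg (x : ℕ → ℝ) (A : Finset (Fin M)) (ω : Fin M × Fin (n + 1) → Bool) :
    appendColumn (fun k => decide (k ∈ A)) ω ∈ cfg x ↔
      ω ∈ cfg x ∧ ((lastLayers ω ∩ A).Nonempty ↔ x (n + 1) = 1) := by
  simp [cfg, act, Fin.forall_fin_succ', Finset.Nonempty, Fin.succ_castSucc, -Fin.castSucc_succ]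

lemma lineμ_real_lastIn_inter (hq : q ∈ Set.Icc (0 : ℝ) 1) (A : Finset (Fin M))
    (E : Set (Fin M × Fin (n + 1) → Bool)) :
    (lineμ M n q).real (lastIn A ∩ E) = q ^ #A * (1 - q) ^ (M - #A) *
      (Measure.pi fun _ : Fin M × Fin n => bern q).real
        {ω | appendColumn (fun k => decide (k ∈ A)) ω ∈ E} := by
  have hprod : (fun p : (Fin M → Bool) × (Fin M × Fin n → Bool) => appendColumn p.1 p.2) ⁻¹'
      (lastIn A ∩ E) =
        {fun k => decide (k ∈ A)} ×ˢ {ω | appendColumn (fun k => decide (k ∈ A)) ω ∈ E} := by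
    ext p
    simp +contextual [appendColumn_mem_lastIn]
  rw [lineμ, ← (measurePreserving_appendColumn (bern q) n).measureReal_preimage
    (Set.toFinite _).measurableSet.nullMeasurableSet, hprod, measureReal_prod_prod,
    pi_bern_real_singleton_mem hq, Fintype.card_fin]

lemma lineμ_real_lastIn (hq : q ∈ Set.Icc (0 : ℝ) 1) (A : Finset (Fin M)) :
    (lineμ M n q).real (lastIn A) = q ^ #A * (1 - q) ^ (M - #A) := by
  have := isProbabilityMeasure_bern hq
  simpa using lineμ_real_lastIn_inter (n := n) hq A Set.univ

lemma Qcond_eq_div (x : ℕ → ℝ) (A : Finset (Fin M)) :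
    Qcond M n q x A = (lineμ M n q).real (lastIn A ∩ cfg x) / (lineμ M n q).real (lastIn A) := by
  rw [Qcond, cond_apply (Set.toFinite _).measurableSet, ENNReal.toReal_mul, ENNReal.toReal_inv,
    div_eq_inv_mul]
  rfl

lemma lineμ_real_lastIn_pos (hq : q ∈ Set.Ioo (0 : ℝ) 1) (A : Finset (Fin M)) :
    0 < (lineμ M n q).real (lastIn A) := by
  rw [lineμ_real_lastIn (Set.Ioo_subset_Icc_self hq)]
  exact mul_pos (pow_pos hq.1 _) (pow_pos (sub_pos.2 hq.2) _)

lemma lineμ_real_lastIn_inter_cfg (hq : q ∈ Set.Ioo (0 : ℝ) 1) (x : ℕ → ℝ)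
    (A : Finset (Fin M)) :
    (lineμ M n q).real (lastIn A ∩ cfg x) = q ^ #A * (1 - q) ^ (M - #A) * Qcond M n q x A := by
  rw [Qcond_eq_div, ← lineμ_real_lastIn (n := n) (Set.Ioo_subset_Icc_self hq),
    mul_div_cancel₀ _ (lineμ_real_lastIn_pos hq A).ne']

lemma Qcond_succ_eq_lineμ_real (hq : q ∈ Set.Ioo (0 : ℝ) 1) (x : ℕ → ℝ) (A : Finset (Fin M)) :
    Qcond M (n + 1) q x A = (lineμ M n q).real
      {ω | ω ∈ cfg x ∧ ((lastLayers ω ∩ A).Nonempty ↔ x (n + 1) = 1)} := by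
  have hpos := lineμ_real_lastIn_pos (n := n + 1) hq A
  have hq' := Set.Ioo_subset_Icc_self hq
  rw [lineμ_real_lastIn hq'] at hpos
  rw [Qcond_eq_div, lineμ_real_lastIn_inter hq', lineμ_real_lastIn hq',
    mul_div_cancel_left₀ _ hpos.ne']
  simp only [appendColumn_mem_cfg]
  rfl

lemma lineμ_real_cfg_inter_lastLayers_preimage (hq : q ∈ Set.Ioo (0 : ℝ) 1) (x : ℕ → ℝ)
    (𝒮 : Finset (Finset (Fin M))) :
    (lineμ M n q).real (lastLayers ⁻¹' 𝒮 ∩ cfg x) =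
      ∑ S ∈ 𝒮, q ^ #S * (1 - q) ^ (M - #S) * Qcond M n q x S := by
  have hmeas (E : Set (Fin M × Fin (n + 1) → Bool)) : MeasurableSet E :=
    (Set.toFinite E).measurableSet
  rw [← measureReal_restrict_apply (hmeas _),
    ← sum_measureReal_preimage_singleton _ fun _ _ => hmeas _]
  refine sum_congr rfl fun S _ => ?_
  rw [measureReal_restrict_apply (hmeas _), ← lastIn_eq_preimage, lineμ_real_lastIn_inter_cfg hq]

lemma Qcond_map_perm (x : ℕ → ℝ) (σ : Equiv.Perm (Fin M)) (A : Finset (Fin M)) :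
    Qcond M n q x (A.map σ.toEmbedding) = Qcond M n q x A := by
  set e : Fin M × Fin (n + 1) ≃ Fin M × Fin (n + 1) := σ.prodCongr (.refl _)
  have hlast : (fun ω : Fin M × Fin (n + 1) → Bool => ω ∘ e) ⁻¹' lastIn A =
      lastIn (A.map σ.toEmbedding) := by
    ext ω
    simp only [lastIn, Set.mem_preimage, Set.mem_ofPred_eq]
    rw [σ.forall_congr_left]
    simp [e]
  have hcfg : (fun ω : Fin M × Fin (n + 1) → Bool => ω ∘ e) ⁻¹' cfg x = cfg x := by
    ext ω
    exact forall_congr' fun j => iff_congr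
      (σ.surjective.exists
        (p := fun k => ω (k, j.castSucc) = true ∧ ω (k, j.succ) = true)).symm .rfl
  have hpres (E : Set (Fin M × Fin (n + 1) → Bool)) :
      (lineμ M n q).real ((fun ω => ω ∘ e) ⁻¹' E) = (lineμ M n q).real E :=
    (measurePreserving_comp_equiv (bern q) e).measureReal_preimage
      (Set.toFinite E).measurableSet.nullMeasurableSet
  rw [Qcond_eq_div, Qcond_eq_div, ← hpres (lastIn A ∩ cfg x), ← hpres (lastIn A),
    Set.preimage_inter, hlast, hcfg]

lemma Qcond_congr_card (x : ℕ → ℝ) {A B : Finset (Fin M)} (h : #A = #B) :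
    Qcond M n q x A = Qcond M n q x B := by
  obtain ⟨σ, rfl⟩ := Equiv.Perm.exists_map_finset_eq A B h
  exact (Qcond_map_perm x σ A).symm

lemma Qcond_succ_eq_sum (hq : q ∈ Set.Ioo (0 : ℝ) 1) (x : ℕ → ℝ) (A : Finset (Fin M)) :
    Qcond M (n + 1) q x A = ∑ S with ((S ∩ A).Nonempty ↔ x (n + 1) = 1),
      q ^ #S * (1 - q) ^ (M - #S) * Qcond M n q x S := by
  rw [Qcond_succ_eq_lineμ_real hq, ← lineμ_real_cfg_inter_lastLayers_preimage hq]
  congr 1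
  ext ω
  simp [and_comm]

lemma Qcond_succ_eq_sum_choose (hq : q ∈ Set.Ioo (0 : ℝ) 1) (x : ℕ → ℝ) (A : Finset (Fin M))
    (B : ℕ → Finset (Fin M)) (hB : ∀ i ≤ M, #(B i) = i) :
    Qcond M (n + 1) q x A =
      ∑ j ∈ range (#A + 1) with (j ≠ 0 ↔ x (n + 1) = 1),
        ((#A).choose j : ℝ) * q ^ j * (1 - q) ^ (#A - j) *
          ∑ i ∈ range (M - #A + 1), ((M - #A).choose i : ℝ) * q ^ i * (1 - q) ^ (M - #A - i) *
            Qcond M n q x (B (i + j)) := by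
  set g : ℕ → ℕ → ℝ := fun j i => if (j ≠ 0 ↔ x (n + 1) = 1) then
    q ^ (i + j) * (1 - q) ^ (M - (i + j)) * Qcond M n q x (B (i + j)) else 0 with hg
  have hQ (S : Finset (Fin M)) : Qcond M n q x S = Qcond M n q x (B #S) :=
    Qcond_congr_card x (hB _ (card_finset_fin_le S)).symm
  have hpow {j i : ℕ} (hj : j ≤ #A) (hi : i ≤ M - #A) : q ^ (i + j) * (1 - q) ^ (M - (i + j)) =
      q ^ j * (1 - q) ^ (#A - j) * (q ^ i * (1 - q) ^ (M - #A - i)) := by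
    have hA := card_finset_fin_le A
    rw [show M - (i + j) = (#A - j) + (M - #A - i) by omega]
    ring
  calc Qcond M (n + 1) q x A
      = ∑ S, g #(S ∩ A) #(S \ A) := by
        simp only [hg, card_sdiff_add_card_inter, card_ne_zero, ← hQ]
        rw [Qcond_succ_eq_sum hq, sum_filter]
    _ = _ := by
        rw [sum_univ_card_inter_card_sdiff, sum_filter]
        refine sum_congr rfl fun j hj => ?_
        have hj : j ≤ #A := mem_range_succ_iff.1 hj
        split_ifs with hjx
        · simp only [hg, if_pos hjx, nsmul_eq_mul, Fintype.card_fin, mul_sum]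
          refine sum_congr rfl fun i hi => ?_
          rw [hpow hj (mem_range_succ_iff.1 hi)]
          ring
        · simp only [hg, if_neg hjx, smul_zero, sum_const_zero]

end LineModel

/-- the recursion for `Q_{x^{(n)}}(m)`, `n ≥ 2`. -/
theorem stmt3 (M : ℕ) (hM : 1 ≤ M) (q : ℝ) (hq : q ∈ Set.Ioo (0 : ℝ) 1)
    (n : ℕ) (hn : 2 ≤ n) (x : ℕ → ℝ) (hx : ∀ j, 1 ≤ j → j ≤ n → (x j = 0 ∨ x j = 1))
    (m : ℕ) (hm : m ≤ M) (A : Finset (Fin M)) (hA : A.card = m)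
    (B : ℕ → Finset (Fin M)) (hB : ∀ i ≤ M, (B i).card = i) :
    Qcond M n q x A
      = (1 - x n) * (1 - q) ^ m *
          (∑ i ∈ Finset.range (M - m + 1),
            ((M - m).choose i : ℝ) * q ^ i * (1 - q) ^ (M - m - i) * Qcond M (n - 1) q x (B i))
        + x n *
          ∑ j ∈ Finset.Icc 1 m, (m.choose j : ℝ) * q ^ j * (1 - q) ^ (m - j) *
            ∑ i ∈ Finset.range (M - m + 1),
              ((M - m).choose i : ℝ) * q ^ i * (1 - q) ^ (M - m - i) *
                Qcond M (n - 1) q x (B (i + j)) := by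
  obtain ⟨n, rfl⟩ : ∃ k, n = k + 1 := ⟨n - 1, by omega⟩
  subst hA
  rw [Nat.add_sub_cancel, Qcond_succ_eq_sum_choose hq x A B hB]
  rcases hx (n + 1) (by omega) le_rfl with h0 | h1
  · have hfilter : {j ∈ range (#A + 1) | j ≠ 0 ↔ x (n + 1) = 1} = {0} := by
      ext j
      simp +contextual [h0]
    rw [hfilter, sum_singleton]
    simp [h0]
  · have hfilter : {j ∈ range (#A + 1) | j ≠ 0 ↔ x (n + 1) = 1} = Icc 1 #A := by
      ext j
      simp [h1, Nat.one_le_iff_ne_zero, and_comm]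
    rw [hfilter]
    simp [h1]
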